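/- arXiv:1912.04177 — 2 statements merged into one kernel-verified Lean document; each statement's English description precedes it below -/
import Mathlib

section
/- Let A, N, B, M be real n×n matrices and let 0 < ε ≤ 1 and 0 < η ≤ 1. Suppose ‖N‖_F² ≤ η ‖A‖_F², that ‖A − B‖_F ≤ ‖A‖_F, and that ‖(A+N) − M‖_F² ≤ ‖(A+N) − B‖_F² + ε ‖A+N‖_F². Then ‖A − M‖_F² ≤ ‖A − B‖_F² + 16(ε + √η) · ‖A‖_F². -/
open Matrix

noncomputable def frobeniusSq {m n : ℕ} (M : Matrix (Fin m) (Fin n) ℝ) : ℝ :=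
  ∑ i, ∑ j, (M i j)^2

noncomputable def opNorm2 {m n : ℕ} (M : Matrix (Fin m) (Fin n) ℝ) : ℝ :=
  ‖LinearMap.toContinuousLinearMap (Matrix.toEuclideanLin M)‖

noncomputable def frobIp {m n : ℕ} (X Y : Matrix (Fin m) (Fin n) ℝ) : ℝ :=
  ∑ i, ∑ j, X i j * Y i j

lemma frob_nonneg {m n : ℕ} (X : Matrix (Fin m) (Fin n) ℝ) : 0 ≤ frobeniusSq X :=
  Finset.sum_nonneg fun _ _ => Finset.sum_nonneg fun _ _ => sq_nonneg _

lemma frob_comb {m n : ℕ} (X Y : Matrix (Fin m) (Fin n) ℝ) (s t : ℝ) :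
    frobeniusSq (s • X + t • Y)
      = s ^ 2 * frobeniusSq X + 2 * s * t * frobIp X Y + t ^ 2 * frobeniusSq Y := by
  simp only [frobeniusSq, frobIp, Finset.mul_sum, ← Finset.sum_add_distrib]
  refine Finset.sum_congr rfl fun i _ => Finset.sum_congr rfl fun j _ => ?_
  simp only [Matrix.add_apply, Matrix.smul_apply, smul_eq_mul]
  ring

lemma frob_young {m n : ℕ} (X Y : Matrix (Fin m) (Fin n) ℝ) (s F : ℝ) (hs : 0 < s)
    (hY : frobeniusSq Y ≤ s ^ 2 * F) :
    2 * frobIp X Y ≤ s * frobeniusSq X + s * F ∧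
    -(2 * frobIp X Y) ≤ s * frobeniusSq X + s * F := by
  have h1 := frob_nonneg (s • X + (-1 : ℝ) • Y)
  have h2 := frob_nonneg (s • X + (1 : ℝ) • Y)
  rw [frob_comb] at h1 h2
  constructor
  · refine le_of_mul_le_mul_left ?_ hs
    nlinarith
  · refine le_of_mul_le_mul_left ?_ hs
    nlinarith

/-- Additive-error low-rank approximation in the robust model: an additive-error
approximation M to the corrupted matrix A+N is an additive-error approximation to A. -/
theorem robust_additive_error_transfer {n : ℕ} (A N B M : Matrix (Fin n) (Fin n) ℝ)
    (ε η : ℝ) (hε : 0 < ε) (hε1 : ε ≤ 1) (hη : 0 < η) (hη1 : η ≤ 1)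
    (hN : frobeniusSq N ≤ η * frobeniusSq A)
    (hAB : Real.sqrt (frobeniusSq (A - B)) ≤ Real.sqrt (frobeniusSq A))
    (hM : frobeniusSq ((A + N) - M) ≤ frobeniusSq ((A + N) - B) + ε * frobeniusSq (A + N)) :
    frobeniusSq (A - M) ≤ frobeniusSq (A - B) + 16 * (ε + Real.sqrt η) * frobeniusSq A := by
  have hF := frob_nonneg A
  have hP : frobeniusSq (A - B) ≤ frobeniusSq A := (Real.sqrt_le_sqrt_iff hF).1 hAB
  obtain ⟨s, hs⟩ : ∃ s, s = Real.sqrt η := ⟨_, rfl⟩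
  have hs0 : 0 < s := hs ▸ Real.sqrt_pos.2 hη
  have hs2 : s ^ 2 = η := by rw [hs]; exact Real.sq_sqrt hη.le
  have hs1 : s ≤ 1 := by nlinarith
  rw [← hs]
  rw [← hs2] at hN
  have e1 := frob_comb (A - B) N 1 1
  rw [show (1 : ℝ) • (A - B) + (1 : ℝ) • N = A + N - B by simp only [one_smul]; abel] at e1
  have e2 := frob_comb (A + N - M) N 1 (-1)
  rw [show (1 : ℝ) • (A + N - M) + (-1 : ℝ) • N = A - M by
    simp only [one_smul, neg_smul]; abel] at e2
  have e3 := frob_comb A N 1 1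
  rw [show (1 : ℝ) • A + (1 : ℝ) • N = A + N by simp only [one_smul]] at e3
  have y1 := (frob_young (A - B) N s _ hs0 hN).1
  have y2 := (frob_young (A + N - M) N s _ hs0 hN).2
  have y3 := (frob_young A N s _ hs0 hN).1
  generalize frobeniusSq (A + N) = T at *
  generalize frobeniusSq (A + N - M) = X at *
  generalize frobeniusSq (A + N - B) = Q at *
  generalize frobeniusSq (A - B) = P at *
  generalize frobeniusSq (A - M) = R at *
  generalize frobeniusSq A = F at *
  have a1 : s * F ≤ F := by nlinarith
  have a2 : s ^ 2 * F ≤ s * F := by nlinarith [mul_nonneg hs0.le hF]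
  have a3 : s * P ≤ s * F := mul_le_mul_of_nonneg_left hP hs0.le
  have t1 : T ≤ 4 * F := by linarith
  have t2 : ε * T ≤ ε * (4 * F) := mul_le_mul_of_nonneg_left t1 hε.le
  have t3 : ε * F ≤ F := by nlinarith
  have x1 : X ≤ P + 3 * (s * F) + 4 * (ε * F) := by linarith
  have x2 : X ≤ 8 * F := by linarith
  have x3 : s * X ≤ s * (8 * F) := mul_le_mul_of_nonneg_left x2 hs0.le
  have z1 : 0 ≤ s * F := mul_nonneg hs0.le hF
  have z2 : 0 ≤ ε * F := mul_nonneg hε.le hF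
  linarith
end

section
/- Let C ∈ ℝ^{n×m}, let Z ∈ ℝ^{m×d} have orthonormal columns (ZᵀZ = I_d), and let S ∈ ℝ^{m×s} be any matrix such that the symmetric positive semidefinite matrix Zᵀ S Sᵀ Z is invertible with smallest eigenvalue at least 9/10. Define Ŵ = C S Sᵀ Z (Zᵀ S Sᵀ Z)⁻¹ (the minimizer of ‖C S − W Zᵀ S‖₂ over W) and C* = C (I_m − Z Zᵀ). Then ‖C − Ŵ Zᵀ‖₂² ≤ (100/81) · ‖C* S Sᵀ Z‖₂² + ‖C*‖₂². -/
open Matrix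

open scoped Matrix.Norms.L2Operator in
theorem opNorm2_eq_l2 {m n : ℕ} (M : Matrix (Fin m) (Fin n) ℝ) : opNorm2 M = ‖M‖ := rfl

open scoped Matrix.Norms.L2Operator in
theorem l2_inv_bound {d : ℕ} (A : Matrix (Fin d) (Fin d) ℝ) (hInv : IsUnit A.det)
    (hEig : (A - (9/10 : ℝ) • (1 : Matrix (Fin d) (Fin d) ℝ)).PosSemidef) :
    ‖A⁻¹‖ ≤ 10/9 := by
  rw [Matrix.l2_opNorm_def]
  refine ContinuousLinearMap.opNorm_le_bound _ (by norm_num) fun x => ?_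
  have hx : A *ᵥ (A⁻¹ *ᵥ x.ofLp) = x.ofLp := by
    rw [Matrix.mulVec_mulVec, Matrix.mul_nonsing_inv _ hInv, Matrix.one_mulVec]
  change ‖WithLp.toLp 2 (A⁻¹ *ᵥ x.ofLp)‖ ≤ _
  generalize A⁻¹ *ᵥ x.ofLp = y at hx
  have h := hEig.dotProduct_mulVec_nonneg y
  rw [Matrix.sub_mulVec, hx, Matrix.smul_mulVec, Matrix.one_mulVec, dotProduct_sub,
    dotProduct_smul, star_trivial] at h
  have h1 : y ⬝ᵥ y = ‖WithLp.toLp 2 y‖ ^ 2 := by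
    rw [EuclideanSpace.real_norm_sq_eq]
    simp [dotProduct, sq]
  have h2 : y ⬝ᵥ x.ofLp ≤ ‖x‖ * ‖WithLp.toLp 2 y‖ := by
    have := real_inner_le_norm x (WithLp.toLp 2 y)
    simpa [EuclideanSpace.inner_eq_star_dotProduct] using this
  rw [h1, smul_eq_mul] at h
  by_contra! hc
  have := norm_nonneg x
  nlinarith

open scoped Matrix.Norms.L2Operator in
theorem sketched_spectral_regression {n m d s : ℕ}
    (C : Matrix (Fin n) (Fin m) ℝ) (Z : Matrix (Fin m) (Fin d) ℝ)
    (S : Matrix (Fin m) (Fin s) ℝ)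
    (hZ : Zᵀ * Z = 1)
    (hInv : IsUnit (Zᵀ * S * Sᵀ * Z).det)
    (hEig : ((Zᵀ * S * Sᵀ * Z) - (9/10 : ℝ) • (1 : Matrix (Fin d) (Fin d) ℝ)).PosSemidef) :
    (opNorm2 (C - (C * S * Sᵀ * Z * (Zᵀ * S * Sᵀ * Z)⁻¹) * Zᵀ))^2 ≤
      (100/81) * (opNorm2 ((C * (1 - Z * Zᵀ)) * S * Sᵀ * Z))^2 +
        (opNorm2 (C * (1 - Z * Zᵀ)))^2 := by
  simp only [opNorm2_eq_l2]
  have hb := l2_inv_bound _ hInv hEig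
  have hE : C * S * Sᵀ * Z = (C * (1 - Z * Zᵀ)) * S * Sᵀ * Z + C * Z * (Zᵀ * S * Sᵀ * Z) := by
    simp only [Matrix.mul_sub, Matrix.sub_mul, Matrix.mul_one, Matrix.mul_assoc]
    abel
  have hCZ : (C * (1 - Z * Zᵀ)) * Z = 0 := by
    simp only [Matrix.mul_sub, Matrix.sub_mul, Matrix.mul_one, Matrix.mul_assoc, hZ, sub_self]
  have hC : C = C * (1 - Z * Zᵀ) + C * Z * Zᵀ := by
    simp only [Matrix.mul_sub, Matrix.mul_one, Matrix.mul_assoc]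
    abel
  generalize Zᵀ * S * Sᵀ * Z = A at *
  rw [hE]
  generalize (C * (1 - Z * Zᵀ)) * S * Sᵀ * Z = E at *
  generalize C * (1 - Z * Zᵀ) = D at *
  have hM : C - (E + C * Z * A) * A⁻¹ * Zᵀ = D - E * A⁻¹ * Zᵀ := by
    rw [Matrix.add_mul, Matrix.mul_assoc (C * Z) A, Matrix.mul_nonsing_inv _ hInv, Matrix.mul_one,
      Matrix.add_mul]
    nth_rw 1 [hC]
    abel
  rw [hM]
  have hF : ‖E * A⁻¹‖ ≤ ‖E‖ * (10/9) :=
    (Matrix.l2_opNorm_mul _ _).trans (mul_le_mul_of_nonneg_left hb (norm_nonneg _))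
  generalize E * A⁻¹ = F at *
  have key : ∀ {p : ℕ} (X : Matrix (Fin n) (Fin p) ℝ), ‖X * Xᵀ‖ = ‖X‖ ^ 2 := by
    intro p X
    have := Matrix.l2_opNorm_conjTranspose_mul_self Xᴴ
    rwa [Matrix.l2_opNorm_conjTranspose, Matrix.conjTranspose_conjTranspose,
      Matrix.conjTranspose_eq_transpose_of_trivial, ← sq] at this
  have hZD : Zᵀ * Dᵀ = 0 := by rw [← Matrix.transpose_mul, hCZ, Matrix.transpose_zero]
  have hMM : (D - F * Zᵀ) * (D - F * Zᵀ)ᵀ = D * Dᵀ + F * Fᵀ := by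
    have e1 : D * (Z * Fᵀ) = 0 := by rw [← Matrix.mul_assoc, hCZ, Matrix.zero_mul]
    have e2 : Zᵀ * (Z * Fᵀ) = Fᵀ := by rw [← Matrix.mul_assoc, hZ, Matrix.one_mul]
    simp only [Matrix.transpose_sub, Matrix.transpose_mul, Matrix.transpose_transpose,
      Matrix.mul_sub, Matrix.sub_mul, Matrix.mul_assoc, hZD, e1, e2, Matrix.mul_zero]
    abel
  rw [← key, hMM]
  have h3 := norm_add_le (D * Dᵀ) (F * Fᵀ)
  rw [key, key] at h3
  have h4 := pow_le_pow_left₀ (norm_nonneg F) hF 2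
  nlinarith
end
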